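/- The family {X ∈ 𝒳_2 : X ⊄ 1+8ℕ₀} coincides with the set of minimal elements of the poset 𝒳_2 (ordered by reverse inclusion), and the complementary set {X ∈ 𝒳_2 : X ⊆ 1+8ℕ₀} is linearly ordered by inclusion and coincides with the family {1+2^nℕ₀ : n ≥ 3}. -/

import Mathlib

/-!
For `a > 1` prime to `p`, the `p`-adic closure of `a^ℕ` consists of the `y` that are congruent to
a power of `a` modulo every `p^n`. Let `p = 2`.

* If `a = 1 + 2^m s` with `s` odd and `m ≥ 2`, then `a^(2^j) = 1 + 2^(m+j) s'` with `s'` odd, so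
  the exponent approximating a given `y ≡ 1 (mod 2^m)` can be corrected one binary digit at a time,
  and the closure is `1 + 2^m ℕ₀`.
* If `a = -1 + 2^m s` with `s` odd and `m ≥ 2`, then `a² = 1 + 2^(m+1) s'` with `s'` odd, and the
  closure is the union of the classes of `1` and `a` modulo `2^(m+1)`.

The closures of the second kind are recognised by their trace on `3 + 4ℕ₀`, and those of the first
kind form a chain with largest element `1 + 4ℕ₀`.
-/

open TopologicalSpace

/-- The arithmetic progression `a + bℕ₀ = {a + b*n : n ≥ 0}` inside the positive integers. -/
def golombBasic (a b : ℕ) : Set ℕ+ := {x : ℕ+ | ∃ n : ℕ, (x : ℕ) = a + b * n}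

/-- The Golomb topology on the positive integers, generated by the arithmetic
progressions `a + bℕ₀` with coprime `a, b ∈ ℕ`. -/
instance golombTopology : TopologicalSpace ℕ+ :=
  generateFrom {S : Set ℕ+ | ∃ a b : ℕ, 0 < a ∧ 0 < b ∧ Nat.Coprime a b ∧ S = golombBasic a b}

/-- The positive integers not divisible by `p` (the set `ℕ \ pℕ`). -/
abbrev Np (p : ℕ) : Type := {x : ℕ+ // ¬ p ∣ (x : ℕ)}

/-- The `p`-adic topology on `ℕ \ pℕ`, generated by the traces of the sets
`x + p^nℕ₀`, `x, n ∈ ℕ`. -/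
def padicTop (p : ℕ) : TopologicalSpace (Np p) :=
  generateFrom {S : Set (Np p) | ∃ x n : ℕ, 0 < x ∧ 0 < n ∧
    S = {y : Np p | ∃ k : ℕ, ((y : ℕ+) : ℕ) = x + p ^ n * k}}

/-- Closure of a set of positive integers in the `p`-adic topology on `ℕ \ pℕ`,
viewed again as a set of positive integers. -/
def padicClosure (p : ℕ) (A : Set ℕ+) : Set ℕ+ :=
  Subtype.val '' (@closure (Np p) (padicTop p) (Subtype.val ⁻¹' A))

/-- `a^ℕ = {a^k : k ∈ ℕ}`, the set of positive powers of `a`. -/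
def powSet (a : ℕ) : Set ℕ+ := {y : ℕ+ | ∃ k : ℕ, 0 < k ∧ (y : ℕ) = a ^ k}

/-- The closure of `a^ℕ` in the `p`-adic topology on `ℕ \ pℕ`. -/
def clPow (p a : ℕ) : Set ℕ+ := padicClosure p (powSet a)

/-- The family `𝒳_p` of closures of the sets `a^ℕ` for `a ∈ ℕ \ pℕ`, `a ≠ 1`. -/
def XX (p : ℕ) : Set (Set ℕ+) := {X | ∃ a : ℕ, 0 < a ∧ a ≠ 1 ∧ ¬ p ∣ a ∧ X = clPow p a}

/-- The projection `π_n(X)` of a set of positive integers to `ℤ/p^nℤ`. -/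
def pin (p n : ℕ) (X : Set ℕ+) : Set (ZMod (p ^ n)) :=
  (fun y : ℕ+ => ((y : ℕ) : ZMod (p ^ n))) '' X

/-- `n(X)`: the least `n ∈ ℕ` with `X = ℕ ∩ π_n⁻¹(π_n(X))` and `|π_n(X)| ≥ max(p,3)`. -/
noncomputable def nX (p : ℕ) (X : Set ℕ+) : ℕ :=
  sInf {n : ℕ | 0 < n ∧ X = {y : ℕ+ | ((y : ℕ) : ZMod (p ^ n)) ∈ pin p n X} ∧
    max p 3 ≤ (pin p n X).ncard}

/-- `i(X)`: the index of the subgroup `π_{n(X)}(X)` in the group of units of `ℤ/p^{n(X)}ℤ`. -/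
noncomputable def iX (p : ℕ) (X : Set ℕ+) : ℕ :=
  Nat.card ((ZMod (p ^ nX p X))ˣ) / (pin p (nX p X) X).ncard

lemma mem_golombBasic_iff {a b : ℕ} {x : ℕ+} :
    x ∈ golombBasic a b ↔ a ≤ x ∧ (x : ℕ) ≡ a [MOD b] := by
  constructor
  · rintro ⟨n, hn⟩
    exact ⟨by omega, by rw [hn]; exact Nat.add_modEq_left_iff.2 (dvd_mul_right _ _)⟩
  · rintro ⟨hle, hmod⟩
    obtain ⟨n, hn⟩ := (Nat.modEq_iff_dvd' hle).1 hmod.symm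
    exact ⟨n, by omega⟩

lemma mem_golombBasic_iff_modEq {a b : ℕ} (hab : a ≤ b) {x : ℕ+} :
    x ∈ golombBasic a b ↔ (x : ℕ) ≡ a [MOD b] := by
  rw [mem_golombBasic_iff, and_iff_right_iff_imp]
  intro hmod
  by_contra! hlt
  have hle : b ≤ a - x := Nat.le_of_dvd (by omega) ((Nat.modEq_iff_dvd' hlt.le).1 hmod)
  have := x.pos
  omega

lemma golombBasic_subset_golombBasic_iff {a b c : ℕ} :
    golombBasic a b ⊆ golombBasic a c ↔ c ∣ b := by
  constructor
  · intro h
    rcases Nat.eq_zero_or_pos (a + b) with hab | hab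
    · simp [(Nat.add_eq_zero_iff.1 hab).2]
    · obtain ⟨n, hn⟩ := h (show ⟨a + b, hab⟩ ∈ golombBasic a b from ⟨1, by simp⟩)
      exact ⟨n, Nat.add_left_cancel hn⟩
  · rintro ⟨d, rfl⟩ x ⟨n, hn⟩
    exact ⟨d * n, by rw [hn, mul_assoc]⟩

lemma padicTop_nhds_hasBasis (p : ℕ) (y : Np p) :
    (@nhds _ (padicTop p) y).HasBasis (fun n : ℕ => 0 < n)
      (fun n => Subtype.val ⁻¹' golombBasic (y : ℕ+) (p ^ n)) := by
  have hnhds : @nhds _ (padicTop p) y =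
      ⨅ n ∈ {n : ℕ | 0 < n}, Filter.principal (Subtype.val ⁻¹' golombBasic (y : ℕ+) (p ^ n)) := by
    rw [padicTop, nhds_generateFrom]
    apply le_antisymm
    · exact le_iInf₂ fun n hn => iInf₂_le _ ⟨⟨0, by simp⟩, y, n, y.1.pos, hn, rfl⟩
    · refine le_iInf₂ ?_
      rintro _ ⟨hy, x, n, -, hn, rfl⟩
      obtain ⟨j, hj⟩ := hy
      refine iInf₂_le_of_le n hn (Filter.principal_mono.2 ?_)
      rintro z ⟨k, hk⟩
      exact ⟨j + k, by rw [hk, hj]; ring⟩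
  rw [hnhds]
  refine Filter.hasBasis_biInf_principal (fun m hm n _ => ?_) ⟨1, Nat.one_pos⟩
  exact ⟨m + n, Nat.add_pos_left hm n,
    Set.preimage_mono (golombBasic_subset_golombBasic_iff.2 (pow_dvd_pow p (by omega))),
    Set.preimage_mono (golombBasic_subset_golombBasic_iff.2 (pow_dvd_pow p (by omega)))⟩

lemma mem_padicClosure_iff {p : ℕ} {A : Set ℕ+} {y : ℕ+} :
    y ∈ padicClosure p A ↔
      ¬ p ∣ (y : ℕ) ∧ ∀ n, 0 < n → (golombBasic y (p ^ n) ∩ A).Nonempty := by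
  let _ := padicTop p
  have mem_closure (hy : ¬ p ∣ (y : ℕ)) :
      (⟨y, hy⟩ : Np p) ∈ closure (Subtype.val ⁻¹' A) ↔
        ∀ n, 0 < n → (golombBasic y (p ^ n) ∩ A).Nonempty := by
    rw [mem_closure_iff_nhds_basis' (padicTop_nhds_hasBasis p ⟨y, hy⟩)]
    refine forall₂_congr fun n hn => ⟨fun ⟨z, hz⟩ => ⟨z, hz⟩, fun ⟨x, ⟨k, hk⟩, hxA⟩ => ?_⟩
    have hx : ¬ p ∣ (x : ℕ) := by
      rwa [hk, Nat.dvd_add_left ((dvd_pow_self p hn.ne').mul_right k)]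
    exact ⟨⟨x, hx⟩, ⟨k, hk⟩, hxA⟩
  constructor
  · rintro ⟨⟨y, hy⟩, hcl, rfl⟩
    exact ⟨hy, (mem_closure hy).1 hcl⟩
  · rintro ⟨hy, h⟩
    exact ⟨⟨y, hy⟩, (mem_closure hy).2 h, rfl⟩

lemma exists_le_pow_modEq_pow {a N : ℕ} (ha : 1 < a) (hN : 0 < N) (haN : a.Coprime N) (k b : ℕ) :
    ∃ l, 0 < l ∧ b ≤ a ^ l ∧ a ^ l ≡ a ^ k [MOD N] := by
  have hφ : 0 < N.totient := Nat.totient_pos.2 hN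
  have hle : b + 1 ≤ N.totient * (b + 1) := Nat.le_mul_of_pos_left _ hφ
  refine ⟨k + N.totient * (b + 1), by omega, ?_, ?_⟩
  · exact (show b ≤ k + N.totient * (b + 1) by omega).trans (Nat.lt_pow_self ha).le
  · simpa [pow_add, pow_mul] using ((Nat.ModEq.pow_totient haN).pow (b + 1)).mul_left (a ^ k)

lemma mem_clPow_iff {p a : ℕ} (hp : p ≠ 1) (ha : 1 < a) (hap : a.Coprime p) {y : ℕ+} :
    y ∈ clPow p a ↔ ∀ n, ∃ k, a ^ k ≡ y [MOD p ^ n] := by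
  rw [clPow, mem_padicClosure_iff]
  constructor
  · rintro ⟨-, h⟩ n
    obtain ⟨x, hx, k, -, hk⟩ := h (n + 1) n.succ_pos
    have hmod : a ^ k ≡ y [MOD p ^ (n + 1)] := hk ▸ (mem_golombBasic_iff.1 hx).2
    exact ⟨k, hmod.of_dvd (pow_dvd_pow p n.le_succ)⟩
  · intro h
    refine ⟨fun hpy => ?_, fun n _ => ?_⟩
    · obtain ⟨k, hk⟩ := h 1
      rw [pow_one] at hk
      exact hp ((hap.pow_left k).symm.eq_one_of_dvd ((hk.dvd_iff dvd_rfl).2 hpy))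
    · have hp0 : p ≠ 0 := by
        rintro rfl
        exact ha.ne' (Nat.coprime_zero_right a |>.1 hap)
      obtain ⟨k, hk⟩ := h n
      obtain ⟨l, hl, hle, hmod⟩ :=
        exists_le_pow_modEq_pow ha (pow_pos hp0.bot_lt n) (hap.pow_right n) k y
      exact ⟨⟨a ^ l, by positivity⟩, mem_golombBasic_iff.2 ⟨hle, hmod.trans hk⟩, l, hl, rfl⟩

lemma exists_natCast_mul_modEq {N : ℕ} (hN : N ≠ 0) {r : ℤ} (hr : IsCoprime r N) (t : ℤ) :
    ∃ c : ℕ, c * r ≡ t [ZMOD N] := by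
  obtain ⟨u, v, huv⟩ := hr
  have hN' : (N : ℤ) ≠ 0 := by exact_mod_cast hN
  refine ⟨(t * u % N).toNat, ?_⟩
  rw [Int.toNat_of_nonneg (Int.emod_nonneg _ hN')]
  calc t * u % N * r ≡ t * u * r [ZMOD N] := (Int.mod_modEq _ _).mul_right r
    _ = t - N * (t * v) := by linear_combination t * huv
    _ ≡ t [ZMOD N] := by simp [Int.modEq_iff_dvd]

section OneAddPrimePow

variable {p m : ℕ} (hp : p.Prime) (hpm : m + 2 ≤ p * m)

include hp hpm

lemma exists_one_add_pow_modEq_one_add {s : ℤ} (hs : ¬ (p : ℤ) ∣ s) (n : ℕ) (t : ℤ) :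
    ∃ c : ℕ, (1 + p ^ m * s) ^ c ≡ 1 + p ^ (m + n) * t [ZMOD p ^ (m + n + 1)] := by
  have hm : m ≠ 0 := by rintro rfl; omega
  obtain ⟨z, hz⟩ := ZMod.exists_one_add_mul_pow_prime_pow_eq (u := (p : ℤ) ^ m) (v := p) hp
    (dvd_pow_self _ hm)
    (by rw [← pow_succ', ← pow_succ, ← pow_mul, mul_comm m]; exact pow_dvd_pow _ hpm) s n
  set r := s + p * z
  have hr : IsCoprime r p := by
    refine ((Nat.prime_iff_prime_int.1 hp).coprime_iff_not_dvd.2 fun h => hs ?_).symm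
    exact (dvd_add_left (dvd_mul_right _ _)).1 h
  obtain ⟨c, hc⟩ := exists_natCast_mul_modEq hp.ne_zero hr t
  refine ⟨p ^ n * c, ?_⟩
  have hlin : (p : ℤ) ^ (m + n + 1) ∣ (1 + p ^ (m + n) * r) ^ c - (1 + p ^ (m + n) * (c * r)) := by
    have hsq : (p : ℤ) ^ (m + n + 1) ∣ (p ^ (m + n) * r) ^ 2 := by
      rw [mul_pow, ← pow_mul]
      exact (pow_dvd_pow _ (by omega)).mul_right _
    obtain ⟨q, hq⟩ := hsq.trans (sq_dvd_add_pow_sub_sub (p ^ (m + n) * r) 1 c)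
    exact ⟨q, by linear_combination hq⟩
  calc (1 + (p : ℤ) ^ m * s) ^ (p ^ n * c) = (1 + p ^ (m + n) * r) ^ c := by
        rw [pow_mul, hz]; ring
    _ ≡ 1 + p ^ (m + n) * (c * r) [ZMOD p ^ (m + n + 1)] := (Int.modEq_iff_dvd.2 hlin).symm
    _ ≡ 1 + p ^ (m + n) * t [ZMOD p ^ (m + n + 1)] := by
        rw [pow_succ _ (m + n)]
        exact (hc.mul_left' (c := _)).add_left 1

lemma exists_one_add_pow_modEq {s y : ℤ} (hs : ¬ (p : ℤ) ∣ s) (hy : y ≡ 1 [ZMOD p ^ m]) (n : ℕ) :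
    ∃ k : ℕ, (1 + p ^ m * s) ^ k ≡ y [ZMOD p ^ n] := by
  have hm : m ≠ 0 := by rintro rfl; omega
  suffices h : ∃ k : ℕ, (1 + p ^ m * s) ^ k ≡ y [ZMOD p ^ (m + n)] by
    obtain ⟨k, hk⟩ := h
    exact ⟨k, hk.of_dvd (pow_dvd_pow _ (by omega))⟩
  induction n with
  | zero => exact ⟨0, by simpa using hy.symm⟩
  | succ n ih =>
    obtain ⟨k, hk⟩ := ih
    obtain ⟨t, ht⟩ := hk.dvd
    obtain ⟨c, hc⟩ := exists_one_add_pow_modEq_one_add hp hpm hs n t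
    have hone : (1 + p ^ m * s) ^ k ≡ 1 [ZMOD p] := by
      have : 1 + p ^ m * s ≡ 1 [ZMOD p] :=
        Int.modEq_iff_dvd.2 (by simpa using (dvd_pow_self (p : ℤ) hm).mul_right s)
      simpa using this.pow k
    refine ⟨k + c, ?_⟩
    calc (1 + (p : ℤ) ^ m * s) ^ (k + c)
        ≡ (1 + p ^ m * s) ^ k * (1 + p ^ (m + n) * t) [ZMOD p ^ (m + n + 1)] := by
          rw [pow_add _ k c]; exact hc.mul_left _
      _ = (1 + p ^ m * s) ^ k + p ^ (m + n) * ((1 + p ^ m * s) ^ k * t) := by ring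
      _ ≡ (1 + p ^ m * s) ^ k + p ^ (m + n) * (1 * t) [ZMOD p ^ (m + n + 1)] := by
          rw [pow_succ _ (m + n)]
          exact ((hone.mul_right t).mul_left' (c := _)).add_left _
      _ = y := by linear_combination -ht

lemma clPow_one_add_prime_pow_mul {s : ℕ} (hs : ¬ p ∣ s) :
    clPow p (1 + p ^ m * s) = golombBasic 1 (p ^ m) := by
  have hm : m ≠ 0 := by rintro rfl; omega
  have hone : 1 + p ^ m * s ≡ 1 [MOD p ^ m] := Nat.add_modEq_left_iff.2 (dvd_mul_right _ _)
  have hcop : (1 + p ^ m * s).Coprime p := by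
    rw [Nat.Coprime, (hone.of_dvd (dvd_pow_self p hm)).gcd_eq, Nat.gcd_one_left]
  have hgt : 1 < 1 + p ^ m * s := by
    have hs0 : s ≠ 0 := by rintro rfl; exact hs (dvd_zero p)
    have := Nat.mul_pos (pow_pos hp.pos m) hs0.bot_lt
    omega
  ext y
  rw [mem_clPow_iff hp.ne_one hgt hcop, mem_golombBasic_iff_modEq (Nat.one_le_pow _ _ hp.pos)]
  constructor
  · intro h
    obtain ⟨k, hk⟩ := h m
    simpa using hk.symm.trans (hone.pow k)
  · intro hy n
    obtain ⟨k, hk⟩ := exists_one_add_pow_modEq hp hpm (mt Int.natCast_dvd_natCast.1 hs)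
      (y := (y : ℕ)) (by exact_mod_cast Int.natCast_modEq_iff.2 hy) n
    exact ⟨k, Int.natCast_modEq_iff.1 (by exact_mod_cast hk)⟩

end OneAddPrimePow

/-- The union of the classes of `1` and `-1 + 2^m` modulo `2^(m+1)`. For `m ≥ 2` this is the
`2`-adic closure of `a^ℕ` whenever `2^m` is the exact power of `2` dividing `a + 1`. -/
def negOneClosure (m : ℕ) : Set ℕ+ :=
  golombBasic 1 (2 ^ (m + 1)) ∪ golombBasic (2 ^ m - 1) (2 ^ (m + 1))

lemma mem_negOneClosure_iff {m : ℕ} {y : ℕ+} :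
    y ∈ negOneClosure m ↔
      (y : ℕ) ≡ 1 [MOD 2 ^ (m + 1)] ∨ (y : ℕ) ≡ 2 ^ m - 1 [MOD 2 ^ (m + 1)] := by
  have hle : 2 ^ m - 1 ≤ 2 ^ (m + 1) := by rw [pow_succ]; omega
  rw [negOneClosure, Set.mem_union, mem_golombBasic_iff_modEq Nat.one_le_two_pow,
    mem_golombBasic_iff_modEq hle]

lemma exists_pow_modEq_of_exists_pow_modEq_mul {a y N : ℕ} (hN : 0 < N) (haN : a.Coprime N)
    (h : ∃ k, a ^ k ≡ a * y [MOD N]) : ∃ k, a ^ k ≡ y [MOD N] := by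
  obtain ⟨k, hk⟩ := h
  have hφ : N.totient = N.totient - 1 + 1 := by have := Nat.totient_pos.2 hN; omega
  refine ⟨k + (N.totient - 1), Nat.ModEq.cancel_left_of_coprime haN.symm ?_⟩
  calc a * a ^ (k + (N.totient - 1)) = a ^ k * a ^ N.totient := by rw [hφ]; simp; ring
    _ ≡ a ^ k * 1 [MOD N] := (Nat.ModEq.pow_totient haN).mul_left _
    _ ≡ a * y [MOD N] := by rwa [mul_one]

section TwoPowMulSubOne

variable {a m s : ℕ} (hm : 2 ≤ m) (hs : Odd s) (ha : a + 1 = 2 ^ m * s)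

include hs ha

lemma modEq_two_pow_sub_one : a ≡ 2 ^ m - 1 [MOD 2 ^ (m + 1)] := by
  obtain ⟨t, rfl⟩ := hs
  have hpos := Nat.two_pow_pos m
  have ha' : a = 2 ^ m - 1 + 2 ^ (m + 1) * t := by
    have : 2 ^ m * (2 * t + 1) = 2 ^ m + 2 ^ (m + 1) * t := by ring
    omega
  rw [ha']
  exact Nat.add_modEq_left_iff.2 (dvd_mul_right _ _)

include hm

lemma exists_odd_sq_eq_one_add_two_pow_mul : ∃ r, Odd r ∧ a ^ 2 = 1 + 2 ^ (m + 1) * r := by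
  obtain ⟨c, rfl⟩ := Nat.exists_eq_add_of_le' hm
  obtain ⟨b, rfl⟩ : ∃ b, a = 2 * b + 1 := by
    refine ⟨2 * (2 ^ c * s) - 1, ?_⟩
    have : 2 ^ (c + 2) * s = 4 * (2 ^ c * s) := by ring
    omega
  have hb : b + 1 = 2 * (2 ^ c * s) := by
    have : 2 ^ (c + 2) * s = 4 * (2 ^ c * s) := by ring
    omega
  refine ⟨b * s, Odd.mul ⟨2 ^ c * s - 1, by omega⟩ hs, ?_⟩
  calc (2 * b + 1) ^ 2 = 1 + 4 * b * (b + 1) := by ring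
    _ = 1 + 2 ^ (c + 2 + 1) * (b * s) := by rw [hb]; ring

lemma sq_modEq_one : a ^ 2 ≡ 1 [MOD 2 ^ (m + 1)] := by
  obtain ⟨r, -, hsq⟩ := exists_odd_sq_eq_one_add_two_pow_mul hm hs ha
  exact hsq ▸ Nat.add_modEq_left_iff.2 (dvd_mul_right _ _)

lemma pow_modEq_one_or_two_pow_sub_one (k : ℕ) :
    a ^ k ≡ 1 [MOD 2 ^ (m + 1)] ∨ a ^ k ≡ 2 ^ m - 1 [MOD 2 ^ (m + 1)] := by
  have heven (i : ℕ) : a ^ (2 * i) ≡ 1 [MOD 2 ^ (m + 1)] := by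
    simpa [pow_mul] using (sq_modEq_one hm hs ha).pow i
  obtain ⟨i, rfl | rfl⟩ := Nat.even_or_odd' k
  · exact .inl (heven i)
  · have hodd : a ^ (2 * i + 1) ≡ a [MOD 2 ^ (m + 1)] := by
      simpa [pow_succ] using (heven i).mul_right a
    exact .inr (hodd.trans (modEq_two_pow_sub_one hs ha))

lemma exists_pow_modEq_of_modEq_one {y : ℕ} (hy : y ≡ 1 [MOD 2 ^ (m + 1)]) (n : ℕ) :
    ∃ k, a ^ k ≡ y [MOD 2 ^ n] := by
  obtain ⟨r, hr, hsq⟩ := exists_odd_sq_eq_one_add_two_pow_mul hm hs ha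
  obtain ⟨k, hk⟩ := exists_one_add_pow_modEq (m := m + 1) Nat.prime_two (by omega) (s := r) (y := y)
    (by exact_mod_cast hr.not_two_dvd_nat) (by exact_mod_cast Int.natCast_modEq_iff.2 hy) n
  refine ⟨2 * k, Int.natCast_modEq_iff.1 ?_⟩
  rw [pow_mul, hsq]
  exact_mod_cast hk

lemma clPow_two_of_add_one_eq : clPow 2 a = negOneClosure m := by
  have hodd : Odd a := by
    have : Even (a + 1) := ha ▸ (even_two.pow_of_ne_zero (by omega)).mul_right s
    exact Nat.not_even_iff_odd.1 (Nat.even_add_one.1 this)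
  have hcop : a.Coprime 2 := Nat.coprime_two_right.2 hodd
  have hgt : 1 < a := by
    have := Nat.mul_le_mul (Nat.pow_le_pow_right two_pos hm) hs.pos
    omega
  ext y
  rw [mem_clPow_iff (by decide) hgt hcop, mem_negOneClosure_iff]
  constructor
  · intro h
    obtain ⟨k, hk⟩ := h (m + 1)
    exact (pow_modEq_one_or_two_pow_sub_one hm hs ha k).imp hk.symm.trans hk.symm.trans
  · rintro (hy | hy) n
    · exact exists_pow_modEq_of_modEq_one hm hs ha hy n
    · -- `a` is its own inverse modulo `2^(m+1)`, so `a * y` lies in the class of `1`.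
      apply exists_pow_modEq_of_exists_pow_modEq_mul (Nat.two_pow_pos n) (hcop.pow_right n)
      refine exists_pow_modEq_of_modEq_one hm hs ha ?_ n
      calc a * y ≡ a * a [MOD 2 ^ (m + 1)] :=
            (hy.trans (modEq_two_pow_sub_one hs ha).symm).mul_left a
        _ = a ^ 2 := (sq a).symm
        _ ≡ 1 [MOD 2 ^ (m + 1)] := sq_modEq_one hm hs ha

end TwoPowMulSubOne

lemma exists_eq_two_pow_mul_odd_of_four_dvd {x : ℕ} (hx : x ≠ 0) (h4 : 4 ∣ x) :
    ∃ m s, 2 ≤ m ∧ Odd s ∧ x = 2 ^ m * s := by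
  obtain ⟨m, s, hs, rfl⟩ := Nat.exists_eq_two_pow_mul_odd hx
  refine ⟨m, s, ?_, hs, rfl⟩
  have hdvd : 2 ^ 2 ∣ 2 ^ m :=
    Nat.Coprime.dvd_of_dvd_mul_right ((Nat.coprime_two_left.2 hs).pow_left 2) h4
  exact (Nat.pow_dvd_pow_iff_le_right one_lt_two).1 hdvd

lemma mem_XX_two_iff {X : Set ℕ+} :
    X ∈ XX 2 ↔ ∃ m, 2 ≤ m ∧ (X = golombBasic 1 (2 ^ m) ∨ X = negOneClosure m) := by
  constructor
  · rintro ⟨a, ha0, ha1, ha2, rfl⟩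
    obtain h | h : a % 4 = 1 ∨ a % 4 = 3 := by omega
    · obtain ⟨m, s, hm, hs, hx⟩ :=
        exists_eq_two_pow_mul_odd_of_four_dvd (x := a - 1) (by omega) (by omega)
      obtain rfl : a = 1 + 2 ^ m * s := by omega
      exact ⟨m, hm, .inl
        (clPow_one_add_prime_pow_mul Nat.prime_two (by omega) hs.not_two_dvd_nat)⟩
    · obtain ⟨m, s, hm, hs, hx⟩ :=
        exists_eq_two_pow_mul_odd_of_four_dvd (x := a + 1) (by omega) (by omega)
      exact ⟨m, hm, .inr (clPow_two_of_add_one_eq hm hs hx)⟩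
  · rintro ⟨m, hm, rfl | rfl⟩
    · have h2 : 2 ∣ 2 ^ m := dvd_pow_self 2 (by omega)
      have hpos := Nat.two_pow_pos m
      refine ⟨1 + 2 ^ m * 1, by omega, by omega, by omega, ?_⟩
      exact (clPow_one_add_prime_pow_mul Nat.prime_two (by omega) (by decide)).symm
    · have h4 : 4 ∣ 2 ^ m := pow_dvd_pow 2 hm
      have hpos := Nat.two_pow_pos m
      refine ⟨2 ^ m - 1, by omega, by omega, by omega, ?_⟩
      exact (clPow_two_of_add_one_eq hm odd_one (by omega)).symm

lemma golombBasic_one_four_mem_XX : golombBasic 1 4 ∈ XX 2 :=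
  mem_XX_two_iff.2 ⟨2, le_rfl, .inl rfl⟩

lemma golombBasic_one_two_pow_subset_iff {m n : ℕ} :
    golombBasic 1 (2 ^ m) ⊆ golombBasic 1 (2 ^ n) ↔ n ≤ m :=
  golombBasic_subset_golombBasic_iff.trans (Nat.pow_dvd_pow_iff_le_right one_lt_two)

lemma golombBasic_one_two_pow_subset_one_four {m : ℕ} (hm : 2 ≤ m) :
    golombBasic 1 (2 ^ m) ⊆ golombBasic 1 4 :=
  golombBasic_one_two_pow_subset_iff (n := 2).2 hm

lemma golombBasic_two_pow_sub_one_subset_three_four {m : ℕ} (hm : 2 ≤ m) :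
    golombBasic (2 ^ m - 1) (2 ^ (m + 1)) ⊆ golombBasic 3 4 := by
  obtain ⟨c, rfl⟩ := Nat.exists_eq_add_of_le' hm
  rintro x ⟨n, hn⟩
  have hpow : 2 ^ (c + 2) = 4 * 2 ^ c := by ring
  have hmul : 2 ^ (c + 2 + 1) * n = 4 * (2 * 2 ^ c * n) := by ring
  have hpos := Nat.two_pow_pos c
  exact ⟨2 ^ c - 1 + 2 * 2 ^ c * n, by omega⟩

lemma disjoint_golombBasic_one_four_three_four :
    Disjoint (golombBasic 1 4) (golombBasic 3 4) := by
  rw [Set.disjoint_left]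
  rintro x ⟨i, hi⟩ ⟨j, hj⟩
  omega

lemma negOneClosure_inter_golombBasic_one_four {m : ℕ} (hm : 2 ≤ m) :
    negOneClosure m ∩ golombBasic 1 4 = golombBasic 1 (2 ^ (m + 1)) := by
  have hdisj := disjoint_golombBasic_one_four_three_four.symm.mono_left
    (golombBasic_two_pow_sub_one_subset_three_four hm)
  rw [negOneClosure, Set.union_inter_distrib_right, hdisj.inter_eq, Set.union_empty,
    Set.inter_eq_left]
  exact golombBasic_one_two_pow_subset_one_four (by omega)

lemma negOneClosure_inter_golombBasic_three_four {m : ℕ} (hm : 2 ≤ m) :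
    negOneClosure m ∩ golombBasic 3 4 = golombBasic (2 ^ m - 1) (2 ^ (m + 1)) := by
  have hdisj := disjoint_golombBasic_one_four_three_four.mono_left
    (golombBasic_one_two_pow_subset_one_four (m := m + 1) (by omega))
  rw [negOneClosure, Set.union_inter_distrib_right, hdisj.inter_eq, Set.empty_union,
    Set.inter_eq_left]
  exact golombBasic_two_pow_sub_one_subset_three_four hm

lemma not_golombBasic_one_four_subset_negOneClosure {m : ℕ} (hm : 2 ≤ m) :
    ¬ golombBasic 1 4 ⊆ negOneClosure m := by
  intro h
  have hsub : golombBasic 1 (2 ^ 2) ⊆ golombBasic 1 (2 ^ (m + 1)) :=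
    negOneClosure_inter_golombBasic_one_four hm ▸ Set.subset_inter h subset_rfl
  have := golombBasic_one_two_pow_subset_iff.1 hsub
  omega

lemma not_negOneClosure_subset_golombBasic_one_four {m : ℕ} (hm : 2 ≤ m) :
    ¬ negOneClosure m ⊆ golombBasic 1 4 := by
  intro h
  have hempty : golombBasic (2 ^ m - 1) (2 ^ (m + 1)) = ∅ := by
    rw [← negOneClosure_inter_golombBasic_three_four hm]
    exact (disjoint_golombBasic_one_four_three_four.mono_left h).inter_eq
  have hlt : 1 < 2 ^ m := Nat.one_lt_two_pow (by omega)
  exact Set.eq_empty_iff_forall_notMem.1 hempty ⟨2 ^ m - 1, by omega⟩ ⟨0, by simp⟩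

lemma eq_of_negOneClosure_subset_negOneClosure {m n : ℕ} (hm : 2 ≤ m) (hn : 2 ≤ n)
    (h : negOneClosure m ⊆ negOneClosure n) : m = n := by
  have hsub : golombBasic (2 ^ m - 1) (2 ^ (m + 1)) ⊆ golombBasic (2 ^ n - 1) (2 ^ (n + 1)) := by
    rw [← negOneClosure_inter_golombBasic_three_four hm,
      ← negOneClosure_inter_golombBasic_three_four hn]
    exact Set.inter_subset_inter_left _ h
  have hlt : 1 < 2 ^ m := Nat.one_lt_two_pow (by omega)
  obtain ⟨k, hk⟩ :=
    hsub (show ⟨2 ^ m - 1, by omega⟩ ∈ golombBasic (2 ^ m - 1) (2 ^ (m + 1)) from ⟨0, by simp⟩)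
  have hpow : 2 ^ m = 2 ^ n * (2 * k + 1) := by
    have hpos := Nat.two_pow_pos n
    have : 2 ^ n * (2 * k + 1) = 2 ^ n + 2 ^ (n + 1) * k := by ring
    rw [PNat.mk_coe] at hk
    omega
  have hmn : m ≤ n := (Nat.pow_dvd_pow_iff_le_right one_lt_two).1 <|
    Nat.Coprime.dvd_of_dvd_mul_right
      ((Nat.coprime_two_left.2 (odd_two_mul_add_one k)).pow_left m) (dvd_of_eq hpow)
  exact le_antisymm hmn ((Nat.pow_dvd_pow_iff_le_right one_lt_two).1 ⟨_, hpow⟩)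

lemma maximal_golombBasic_one_four : Maximal (· ∈ XX 2) (golombBasic 1 4) := by
  refine ⟨golombBasic_one_four_mem_XX, fun Y hY h => ?_⟩
  obtain ⟨n, hn, rfl | rfl⟩ := mem_XX_two_iff.1 hY
  · exact golombBasic_one_two_pow_subset_one_four hn
  · exact absurd h (not_golombBasic_one_four_subset_negOneClosure hn)

lemma maximal_negOneClosure {m : ℕ} (hm : 2 ≤ m) : Maximal (· ∈ XX 2) (negOneClosure m) := by
  refine ⟨mem_XX_two_iff.2 ⟨m, hm, .inr rfl⟩, fun Y hY h => ?_⟩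
  obtain ⟨n, hn, rfl | rfl⟩ := mem_XX_two_iff.1 hY
  · exact absurd (h.trans (golombBasic_one_two_pow_subset_one_four hn))
      (not_negOneClosure_subset_golombBasic_one_four hm)
  · rw [eq_of_negOneClosure_subset_negOneClosure hm hn h]

lemma mem_XX_two_and_subset_iff {X : Set ℕ+} :
    X ∈ XX 2 ∧ X ⊆ golombBasic 1 8 ↔ ∃ n, 3 ≤ n ∧ X = golombBasic 1 (2 ^ n) := by
  constructor
  · rintro ⟨hX, hsub⟩
    obtain ⟨n, hn, rfl | rfl⟩ := mem_XX_two_iff.1 hX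
    · exact ⟨n, golombBasic_one_two_pow_subset_iff (n := 3).1 hsub, rfl⟩
    · exact absurd (hsub.trans (golombBasic_one_two_pow_subset_one_four (m := 3) (by omega)))
        (not_negOneClosure_subset_golombBasic_one_four hn)
  · rintro ⟨n, hn, rfl⟩
    exact ⟨mem_XX_two_iff.2 ⟨n, by omega, .inl rfl⟩,
      golombBasic_one_two_pow_subset_iff (n := 3).2 hn⟩

lemma maximal_mem_XX_two_iff {X : Set ℕ+} :
    Maximal (· ∈ XX 2) X ↔ X ∈ XX 2 ∧ ¬ X ⊆ golombBasic 1 8 := by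
  constructor
  · refine fun hmax => ⟨hmax.prop, fun hsub => ?_⟩
    have h84 : golombBasic 1 8 ⊆ golombBasic 1 4 :=
      golombBasic_subset_golombBasic_iff.2 (by decide)
    have h48 : golombBasic 1 4 ⊆ golombBasic 1 8 :=
      (hmax.le_of_ge golombBasic_one_four_mem_XX (hsub.trans h84)).trans hsub
    exact absurd (golombBasic_subset_golombBasic_iff.1 h48) (by decide)
  · rintro ⟨hX, hnot⟩
    obtain ⟨m, hm, rfl | rfl⟩ := mem_XX_two_iff.1 hX
    · have hlt : ¬ 3 ≤ m := mt (golombBasic_one_two_pow_subset_iff (n := 3)).2 hnot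
      obtain rfl : m = 2 := by omega
      exact maximal_golombBasic_one_four
    · exact maximal_negOneClosure hm

/-- `{X ∈ 𝒳_2 : X ⊄ 1 + 8ℕ₀}` is exactly the set of minimal elements of the poset `𝒳_2`
(ordered by reverse inclusion), while `{X ∈ 𝒳_2 : X ⊆ 1 + 8ℕ₀}` is linearly ordered by
inclusion and coincides with `{1 + 2^nℕ₀ : n ≥ 3}`. -/
theorem XX_two_minimal_elements :
    ({X : Set ℕ+ | X ∈ XX 2 ∧ ¬ X ⊆ golombBasic 1 8} =
      {X : Set ℕ+ | X ∈ XX 2 ∧ ∀ Y ∈ XX 2, X ⊆ Y → Y = X}) ∧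
    (∀ X ∈ XX 2, ∀ Y ∈ XX 2, X ⊆ golombBasic 1 8 → Y ⊆ golombBasic 1 8 →
      X ⊆ Y ∨ Y ⊆ X) ∧
    {X : Set ℕ+ | X ∈ XX 2 ∧ X ⊆ golombBasic 1 8} =
      {S : Set ℕ+ | ∃ n : ℕ, 3 ≤ n ∧ S = golombBasic 1 (2 ^ n)} := by
  refine ⟨?_, fun X hX Y hY hX8 hY8 => ?_, Set.ext fun X => mem_XX_two_and_subset_iff⟩
  · ext X
    refine maximal_mem_XX_two_iff.symm.trans (maximal_subset_iff.trans ?_)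
    exact and_congr_right' (forall₃_congr fun _ _ _ => eq_comm)
  · obtain ⟨m, -, rfl⟩ := mem_XX_two_and_subset_iff.1 ⟨hX, hX8⟩
    obtain ⟨n, -, rfl⟩ := mem_XX_two_and_subset_iff.1 ⟨hY, hY8⟩
    exact (le_total n m).imp golombBasic_one_two_pow_subset_iff.2
      golombBasic_one_two_pow_subset_iff.2
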